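/- Let H = (A, B, E) be a finite bipartite graph with vertex degrees d_v, let x ≥ 2 and 0 ≤ s ≤ 1 be real numbers. Then T̃_H(x,0) · T̃_H(0,x) ≥ Π_{v ∈ V(H)} [ ( (d_v+x)s/(d_v+1) + x(1−s) ) · ( s − (s/(d_v+1)) · Π_{u ∈ N(v)} γ_{x,s}(d_u) ) ]. -/

import Mathlib

open scoped Classical

/-- The permutation Tutte polynomial of a bipartite graph `G` on finite vertex set `V`
with bipartition class `A` (the other class being `Aᶜ`). -/
noncomputable def permTutte {V : Type*} [Fintype V] [DecidableEq V]
    (G : SimpleGraph V) (A : Set V) (x y : ℝ) : ℝ :=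
  ((Fintype.card V).factorial : ℝ)⁻¹ *
    ∑ π : V ≃ Fin (Fintype.card V),
      x ^ Nat.card {i : V // i ∈ A ∧ ∀ j, G.Adj i j → π j < π i} *
      y ^ Nat.card {j : V // j ∉ A ∧ ∀ i, G.Adj j i → π i < π j}

/-- `G` is bipartite with parts `A` and `Aᶜ`. -/
def IsBipartition {V : Type*} (G : SimpleGraph V) (A : Set V) : Prop :=
  ∀ u v, G.Adj u v → (u ∈ A ↔ v ∉ A)

/-- `γ_{x,s}(d) = (d+x)s / ((d+x)s + (d+1)x(1−s))`. -/
noncomputable def gam (x s d : ℝ) : ℝ :=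
  ((d + x) * s) / ((d + x) * s + (d + 1) * x * (1 - s))

/-!
`T̃(x, 0)` is the limit as `n → ∞` of the expected product of activity factors under independent
labels in `{low, high} × {0, …, n - 1}`, ordered lexicographically, in which every vertex is low
with probability `s`: ties of labels have vanishing probability, and by exchangeability the order of
distinct labels is uniform. Only assignments of levels that are low outside `A` are kept.

Given such levels, raising the labels in `A` and lowering those outside `A` increases every activity
factor, so by the FKG inequality the expected product is at least the product of the expectations.
These are governed by the probability `1 / (d_v + 1)` that `v` has the largest label of its
neighbourhood. For `v ∈ A` the result is `x` or `(d_v + x) / (d_v + 1)` according to the level of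
`v`; absorbing it into the level weights makes `v` low with probability `γ_{x,s}(d_v)`. For `v ∉ A`
the result is increasing in the levels, so a second application of FKG, now to the tilted levels,
lets the neighbours of `v` contribute the factor `∏ γ_{x,s}(d_u)`. Exchanging the two classes bounds
`T̃(0, x)`.
-/

open Finset Filter Topology
open scoped BigOperators

section FKG

variable {R κ : Type*} [CommSemiring R] [LinearOrder R] [IsStrictOrderedRing R] [ExistsAddOfLE R]

lemma prod_sum_mul_le_sum_mul_prod_of_logSupermodular {α : Type*} [DistribLattice α] [Fintype α]
    {μ : α → R} (hμ : ∀ a, 0 ≤ μ a) (hμ1 : ∑ a, μ a = 1)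
    (hlog : ∀ a b, μ a * μ b ≤ μ (a ⊓ b) * μ (a ⊔ b))
    {φ : κ → α → R} {s : Finset κ} (h0 : ∀ c ∈ s, ∀ a, 0 ≤ φ c a) (hm : ∀ c ∈ s, Monotone (φ c)) :
    ∏ c ∈ s, ∑ a, μ a * φ c a ≤ ∑ a, μ a * ∏ c ∈ s, φ c a := by
  induction s using Finset.cons_induction with
  | empty => simp [hμ1]
  | cons c s hc ih =>
    simp only [forall_mem_cons] at h0 hm
    have hmono : Monotone fun a => ∏ c ∈ s, φ c a :=
      fun a b hab => prod_le_prod (fun c hc => h0.2 c hc a) fun c hc => hm.2 c hc hab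
    simp only [prod_cons]
    calc (∑ a, μ a * φ c a) * ∏ c ∈ s, ∑ a, μ a * φ c a
        ≤ (∑ a, μ a * φ c a) * ∑ a, μ a * ∏ c ∈ s, φ c a :=
          mul_le_mul_of_nonneg_left (ih h0.2 hm.2)
            (sum_nonneg fun a _ => mul_nonneg (hμ a) (h0.1 a))
      _ ≤ (∑ a, μ a) * ∑ a, μ a * (φ c a * ∏ c ∈ s, φ c a) :=
          fkg (φ c) _ μ hμ h0.1 (fun a => prod_nonneg fun c hc => h0.2 c hc a) hm.1 hmono hlog
      _ = ∑ a, μ a * (φ c a * ∏ c ∈ s, φ c a) := by rw [hμ1, one_mul]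

lemma prod_sum_mul_le_sum_mul_prod_of_monotone {ι : Type*} [Fintype ι] [DecidableEq ι]
    {L : ι → Type*} [∀ i, LinearOrder (L i)] [∀ i, Fintype (L i)]
    {w : ∀ i, L i → R} (hw : ∀ i a, 0 ≤ w i a) (hw1 : ∀ i, ∑ a, w i a = 1)
    {φ : κ → (∀ i, L i) → R} {s : Finset κ} (h0 : ∀ c ∈ s, ∀ f, 0 ≤ φ c f)
    (hm : ∀ c ∈ s, Monotone (φ c)) :
    ∏ c ∈ s, ∑ f, (∏ i, w i (f i)) * φ c f ≤ ∑ f, (∏ i, w i (f i)) * ∏ c ∈ s, φ c f := by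
  refine prod_sum_mul_le_sum_mul_prod_of_logSupermodular
    (fun f => prod_nonneg fun i _ => hw i _) ?_ (fun f g => le_of_eq ?_) h0 hm
  · rw [← Fintype.prod_sum, prod_congr rfl fun i _ => hw1 i, prod_const_one]
  · simp only [← prod_mul_distrib]
    refine prod_congr rfl fun i _ => ?_
    rcases le_total (f i) (g i) with h | h
    · simp [h]
    · simp [h, mul_comm]

end FKG

section UniformFKG

variable {𝕜 κ : Type*} [Field 𝕜] [LinearOrder 𝕜] [IsStrictOrderedRing 𝕜]

lemma prod_expect_le_expect_prod_of_monotone {α : Type*} [DistribLattice α] [Fintype α] [Nonempty α]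
    {φ : κ → α → 𝕜} {s : Finset κ} (h0 : ∀ c ∈ s, ∀ a, 0 ≤ φ c a) (hm : ∀ c ∈ s, Monotone (φ c)) :
    ∏ c ∈ s, 𝔼 a, φ c a ≤ 𝔼 a, ∏ c ∈ s, φ c a := by
  have hcard : (Fintype.card α : 𝕜) ≠ 0 := Nat.cast_ne_zero.2 Fintype.card_ne_zero
  simpa only [← mul_sum, Fintype.expect_eq_sum_div_card, div_eq_inv_mul] using
    prod_sum_mul_le_sum_mul_prod_of_logSupermodular (μ := fun _ : α => (Fintype.card α : 𝕜)⁻¹)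
      (fun _ => by positivity) (by simp [hcard]) (fun _ _ => le_rfl) h0 hm

lemma prod_expect_le_expect_prod_of_monotoneOn_antitoneOn {ι : Type*} [Fintype ι] [DecidableEq ι]
    {L : ι → Type*} [∀ i, DistribLattice (L i)] [∀ i, Fintype (L i)] [∀ i, Nonempty (L i)]
    (A : Set ι) {φ : κ → (∀ i, L i) → 𝕜} {s : Finset κ} (h0 : ∀ c ∈ s, ∀ f, 0 ≤ φ c f)
    (hm : ∀ c ∈ s, ∀ f g, (∀ i ∈ A, f i ≤ g i) → (∀ i ∉ A, g i ≤ f i) → φ c f ≤ φ c g) :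
    ∏ c ∈ s, 𝔼 f, φ c f ≤ 𝔼 f, ∏ c ∈ s, φ c f := by
  let e : (∀ i, L i) ≃ (∀ i : {i // i ∈ A}, L i) × (∀ i : {i // i ∉ A}, L i)ᵒᵈ :=
    (Equiv.piEquivPiSubtypeProd (· ∈ A) L).trans (Equiv.prodCongr (Equiv.refl _) OrderDual.toDual)
  have hexpect (ψ : (∀ i, L i) → 𝕜) : 𝔼 a, ψ (e.symm a) = 𝔼 f, ψ f :=
    Fintype.expect_equiv e.symm _ _ fun _ => rfl
  have hmono : ∀ c ∈ s, Monotone fun a => φ c (e.symm a) := by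
    intro c hc a b hab
    refine hm c hc _ _ (fun i hi => ?_) fun i hi => ?_
    · simpa [e, hi] using hab.1 ⟨i, hi⟩
    · have hdual : OrderDual.ofDual b.2 ≤ OrderDual.ofDual a.2 := hab.2
      simpa [e, hi] using hdual ⟨i, hi⟩
  calc ∏ c ∈ s, 𝔼 f, φ c f = ∏ c ∈ s, 𝔼 a, φ c (e.symm a) := by simp only [hexpect]
    _ ≤ 𝔼 a, ∏ c ∈ s, φ c (e.symm a) :=
      prod_expect_le_expect_prod_of_monotone (fun c hc a => h0 c hc (e.symm a)) hmono
    _ = 𝔼 f, ∏ c ∈ s, φ c f := hexpect fun f => ∏ c ∈ s, φ c f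

end UniformFKG

lemma sum_prod_mul_prod_eq_prod_sum_mul {R ι : Type*} [CommSemiring R] [Fintype ι] [DecidableEq ι]
    {L : ι → Type*} [∀ i, Fintype (L i)] {w : ∀ i, L i → R} (hw1 : ∀ i, ∑ a, w i a = 1)
    (S : Finset ι) (g : ∀ i, L i → R) :
    ∑ f : ∀ i, L i, (∏ i, w i (f i)) * ∏ i ∈ S, g i (f i) =
      ∏ i ∈ S, ∑ a, w i a * g i a := by
  calc ∑ f : ∀ i, L i, (∏ i, w i (f i)) * ∏ i ∈ S, g i (f i)
      = ∑ f : ∀ i, L i, ∏ i, w i (f i) * if i ∈ S then g i (f i) else 1 := by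
        simp only [prod_mul_distrib, Fintype.prod_ite_mem]
    _ = ∏ i, ∑ a, w i a * if i ∈ S then g i a else 1 :=
        (Fintype.prod_sum fun i a => w i a * if i ∈ S then g i a else 1).symm
    _ = ∏ i, if i ∈ S then ∑ a, w i a * g i a else 1 := by
        refine prod_congr rfl fun i _ => ?_
        split_ifs <;> simp [hw1]
    _ = ∏ i ∈ S, ∑ a, w i a * g i a := Fintype.prod_ite_mem S _

section Maximum

variable {ι L : Type*} [Fintype ι] [DecidableEq ι] [Fintype L]

section Semifield

variable {𝕜 : Type*} [Semifield 𝕜] [CharZero 𝕜] (r : L → L → Prop) [DecidableRel r]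
  {T : Finset ι} {v w : ι}

lemma expect_ite_forall_erase_eq (hv : v ∈ T) (hw : w ∈ T) :
    (𝔼 f : ι → L, if ∀ u ∈ T.erase v, r (f u) (f v) then (1 : 𝕜) else 0) =
      𝔼 f : ι → L, if ∀ u ∈ T.erase w, r (f u) (f w) then 1 else 0 := by
  refine Fintype.expect_equiv (Equiv.arrowCongr (Equiv.swap v w) (Equiv.refl L)) _ _ fun f => ?_
  have hmem (u : ι) : Equiv.swap v w u ∈ T.erase v ↔ u ∈ T.erase w := by
    rw [mem_erase, mem_erase, Ne, Equiv.swap_apply_eq_iff, Equiv.swap_apply_left]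
    refine and_congr_right fun hu => ?_
    by_cases huv : u = v
    · simp [huv, hv, hw]
    · rw [Equiv.swap_apply_of_ne_of_ne huv hu]
  refine if_congr ?_ rfl rfl
  rw [← (Equiv.swap v w).forall_congr_right]
  simp [hmem]

lemma card_mul_expect_ite_forall_erase_eq (hv : v ∈ T) :
    (#T : 𝕜) * 𝔼 f : ι → L, (if ∀ u ∈ T.erase v, r (f u) (f v) then (1 : 𝕜) else 0) =
      𝔼 f : ι → L, (#{w ∈ T | ∀ u ∈ T.erase w, r (f u) (f w)} : 𝕜) := by
  rw [← nsmul_eq_mul, ← sum_const, sum_congr rfl fun w hw => expect_ite_forall_erase_eq r hv hw,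
    ← expect_sum_comm]
  simp only [sum_boole]

end Semifield

variable {𝕜 : Type*} [Field 𝕜] [LinearOrder 𝕜] [IsStrictOrderedRing 𝕜]
  [LinearOrder L] [Nonempty L] {S : Finset ι} {v : ι}

lemma inv_card_add_one_le_expect_ite_forall_le (hv : v ∉ S) :
    (#S + 1 : 𝕜)⁻¹ ≤ 𝔼 f : ι → L, if ∀ u ∈ S, f u ≤ f v then (1 : 𝕜) else 0 := by
  have hcount := card_mul_expect_ite_forall_erase_eq (𝕜 := 𝕜) (L := L) (· ≤ ·) (mem_insert_self v S)
  rw [erase_insert hv, card_insert_of_notMem hv, Nat.cast_add_one] at hcount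
  rw [inv_le_iff_one_le_mul₀' (by positivity), hcount]
  refine le_expect univ_nonempty fun f _ => ?_
  obtain ⟨w, hw, hmax⟩ := exists_max_image (insert v S) f (insert_nonempty v S)
  exact Nat.one_le_cast.2 (card_pos.2 ⟨w, by simpa [hw] using fun u _ => hmax u⟩)

lemma expect_ite_forall_lt_le_inv_card_add_one (hv : v ∉ S) :
    (𝔼 f : ι → L, if ∀ u ∈ S, f u < f v then (1 : 𝕜) else 0) ≤ (#S + 1 : 𝕜)⁻¹ := by
  have hcount := card_mul_expect_ite_forall_erase_eq (𝕜 := 𝕜) (L := L) (· < ·) (mem_insert_self v S)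
  rw [erase_insert hv, card_insert_of_notMem hv, Nat.cast_add_one] at hcount
  rw [← one_div, le_div_iff₀' (by positivity), hcount]
  refine expect_le univ_nonempty fun f _ => Nat.cast_le_one.2 (card_le_one.2 ?_)
  simp only [mem_filter, mem_erase, and_imp]
  intro a ha hamax b hb hbmax
  by_contra hab
  exact (hamax b (Ne.symm hab) hb).asymm (hbmax a hab ha)

end Maximum

lemma tendsto_expect_ite_injective (V : Type*) [Fintype V] [DecidableEq V] (a b : ℝ) :
    Tendsto (fun n : ℕ => 𝔼 f : V → Fin n, if Function.Injective f then a else b) atTop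
      (𝓝 a) := by
  set m := Fintype.card V
  have hcard (n : ℕ) : #{f : V → Fin n | Function.Injective f} = n.descFactorial m := by
    rw [← Fintype.card_subtype,
      Fintype.card_congr (Equiv.subtypeInjectiveEquivEmbedding V (Fin n)),
      Fintype.card_embedding_eq, Fintype.card_fin]
  have hratio : Tendsto (fun n : ℕ => (n.descFactorial m : ℝ) / (n : ℝ) ^ m) atTop (𝓝 1) := by
    refine (Asymptotics.isEquivalent_iff_tendsto_one ?_).1 (isEquivalent_descFactorial m)
    filter_upwards [eventually_ne_atTop 0] with n hn
    exact pow_ne_zero m (Nat.cast_ne_zero.2 hn)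
  have hlim := (hratio.mul_const (a - b)).add_const b
  rw [one_mul, sub_add_cancel] at hlim
  refine hlim.congr' ?_
  filter_upwards [eventually_ne_atTop 0] with n hn
  have : NeZero n := ⟨hn⟩
  have hsplit (f : V → Fin n) : (if Function.Injective f then a else b) =
      (if Function.Injective f then 1 else 0) * (a - b) + b := by
    split_ifs <;> ring
  simp only [hsplit, expect_add_distrib, ← expect_mul]
  rw [Fintype.expect_const, Fintype.expect_eq_sum_div_card, sum_boole, hcard, Fintype.card_fun,
    Fintype.card_fin, Nat.cast_pow]

section Activity

variable {V L L' : Type*} {G : SimpleGraph V} {A : Set V} {x : ℝ} {v : V}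

/-- The factor of the vertex `v` in the summand `x ^ ia * 0 ^ ea` of `T̃(x, 0)`, for a labelling `f`
that may have ties: a tie makes a vertex of `A` active and a vertex outside `A` inactive. -/
noncomputable def activityFactor [Preorder L] (G : SimpleGraph V) (A : Set V) (x : ℝ) (f : V → L)
    (v : V) : ℝ :=
  if v ∈ A then if ∀ u, G.Adj v u → f u ≤ f v then x else 1
  else if ∀ u, G.Adj v u → f u < f v then 0 else 1

lemma activityFactor_nonneg [Preorder L] (hx : 0 ≤ x) (f : V → L) (v : V) :
    0 ≤ activityFactor G A x f v := by
  unfold activityFactor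
  split_ifs <;> first | exact hx | exact zero_le_one | exact le_rfl

lemma activityFactor_le [Preorder L] (hx : 1 ≤ x) (f : V → L) (v : V) :
    activityFactor G A x f v ≤ x := by
  unfold activityFactor
  split_ifs <;> linarith

lemma activityFactor_congr [Preorder L] [Preorder L'] {f : V → L} {g : V → L'}
    (hle : ∀ u w, f u ≤ f w ↔ g u ≤ g w) (v : V) :
    activityFactor G A x f v = activityFactor G A x g v := by
  simp only [activityFactor, lt_iff_le_not_ge, hle]

lemma activityFactor_mono [Preorder L] (hbip : IsBipartition G A) (hx : 1 ≤ x) {f g : V → L}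
    (hmem : ∀ u ∈ A, f u ≤ g u) (hnotMem : ∀ u ∉ A, g u ≤ f u) (v : V) :
    activityFactor G A x f v ≤ activityFactor G A x g v := by
  unfold activityFactor
  by_cases hv : v ∈ A
  · have hactive : (∀ u, G.Adj v u → f u ≤ f v) → ∀ u, G.Adj v u → g u ≤ g v := fun hf u hu =>
      (hnotMem u ((hbip v u hu).1 hv)).trans ((hf u hu).trans (hmem v hv))
    simp only [hv, if_true]
    split_ifs with hf hg hg <;> first | exact le_rfl | exact hx | exact absurd (hactive hf) hg
  · have hactive : (∀ u, G.Adj v u → g u < g v) → ∀ u, G.Adj v u → f u < f v := fun hg u hu =>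
      (hmem u ((hbip u v hu.symm).2 hv)).trans_lt ((hg u hu).trans_le (hnotMem v hv))
    simp only [hv, if_false]
    split_ifs with hf hg hg <;> first
      | exact le_rfl | exact zero_le_one | exact absurd (hactive hg) hf

lemma prod_activityFactor_of_injective [Fintype V] [PartialOrder L] (G : SimpleGraph V)
    (A : Set V) (x : ℝ) {f : V → L} (hf : Function.Injective f) :
    ∏ v, activityFactor G A x f v =
      x ^ Nat.card {i : V // i ∈ A ∧ ∀ j, G.Adj i j → f j < f i} *
        0 ^ Nat.card {j : V // j ∉ A ∧ ∀ i, G.Adj j i → f i < f j} := by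
  have hpow (y : ℝ) (p : V → Prop) : y ^ Nat.card {v // p v} = ∏ v, if p v then y else 1 := by
    rw [Nat.card_eq_fintype_card, Fintype.card_subtype, prod_ite, prod_const, prod_const_one,
      mul_one]
  have hstrict (v : V) : (∀ u, G.Adj v u → f u ≤ f v) ↔ ∀ u, G.Adj v u → f u < f v :=
    forall₂_congr fun u hu => (hf.ne hu.ne').le_iff_lt
  rw [hpow, hpow, ← prod_mul_distrib]
  refine prod_congr rfl fun v _ => ?_
  by_cases hv : v ∈ A <;> simp [activityFactor, hv, hstrict]

variable [Fintype V] [DecidableEq V]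

lemma permTutte_swap (G : SimpleGraph V) (A : Set V) (x y : ℝ) :
    permTutte G A x y = permTutte G Aᶜ y x := by
  simp only [permTutte, Set.mem_compl_iff, not_not, mul_comm]

lemma permTutte_eq_expect_perm [LinearOrder L] (G : SimpleGraph V) (A : Set V) (x : ℝ) {f : V → L}
    (hf : Function.Injective f) :
    permTutte G A x 0 = 𝔼 σ : Equiv.Perm V, ∏ v, activityFactor G A x (f ∘ σ) v := by
  obtain ⟨π, hπ⟩ : ∃ π : V ≃ Fin (Fintype.card V), ∀ u w, π u ≤ π w ↔ f u ≤ f w :=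
    letI : LinearOrder V := LinearOrder.lift' f hf
    ⟨(monoEquivOfFin V rfl).symm.toEquiv, fun _ _ => (monoEquivOfFin V rfl).symm.le_iff_le⟩
  calc permTutte G A x 0
      = 𝔼 τ : V ≃ Fin (Fintype.card V), ∏ v, activityFactor G A x τ v := by
        rw [Fintype.expect_eq_sum_div_card, Fintype.card_equiv π, permTutte, inv_mul_eq_div]
        simp only [prod_activityFactor_of_injective G A x (Equiv.injective _)]
    _ = 𝔼 σ : Equiv.Perm V, ∏ v, activityFactor G A x (σ.trans π) v :=
        (Fintype.expect_equiv (Equiv.equivCongr (Equiv.refl V) π) _ _ fun _ => rfl).symm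
    _ = 𝔼 σ : Equiv.Perm V, ∏ v, activityFactor G A x (f ∘ σ) v :=
        expect_congr rfl fun σ _ => prod_congr rfl fun v _ =>
          activityFactor_congr (fun u w => hπ (σ u) (σ w)) v

end Activity

section LevelLabel

variable {V K L : Type*}

/-- The labelling that orders the vertices by level `c` first and breaks ties within a level by `f`.
It is the independent labelling of the vertices by `K ×ₗ L`, split into two stages. -/
def levelLabel (c : V → K) (f : V → L) (v : V) : K ×ₗ L := toLex (c v, f v)

lemma injective_levelLabel (c : V → K) {f : V → L} (hf : Function.Injective f) :
    Function.Injective (levelLabel c f) :=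
  fun _ _ h => hf (Prod.ext_iff.1 (toLex.injective h)).2

variable {G : SimpleGraph V} {A : Set V} {x : ℝ} {v : V}

lemma activityFactor_levelLabel_mono [PartialOrder K] [Preorder L] (hbip : IsBipartition G A)
    (hx : 1 ≤ x) (c : V → K) {f g : V → L} (hmem : ∀ u ∈ A, f u ≤ g u)
    (hnotMem : ∀ u ∉ A, g u ≤ f u) (v : V) :
    activityFactor G A x (levelLabel c f) v ≤ activityFactor G A x (levelLabel c g) v :=
  activityFactor_mono (f := levelLabel c f) (g := levelLabel c g) hbip hx
    (fun u hu => Prod.Lex.toLex_le_toLex.2 <| Or.inr ⟨rfl, hmem u hu⟩)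
    (fun u hu => Prod.Lex.toLex_le_toLex.2 <| Or.inr ⟨rfl, hnotMem u hu⟩) v

lemma sum_prod_mul_expect_activityFactor_le [Fintype V] [DecidableEq V] [Fintype K]
    [LinearOrder K] [Fintype L] [LinearOrder L] {p : K → ℝ} (hp : ∀ k, 0 ≤ p k)
    (hp1 : ∑ k, p k = 1) (hx : 1 ≤ x) :
    ∑ c : V → K, (∏ v, p (c v)) * 𝔼 f : V → L, ∏ v, activityFactor G A x (levelLabel c f) v ≤
      𝔼 f : V → L, if Function.Injective f then permTutte G A x 0 else x ^ Fintype.card V := by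
  set Φ : (V → K ×ₗ L) → ℝ := fun h => ∏ v, activityFactor G A x h v
  have hsymm (σ : Equiv.Perm V) :
      ∑ c : V → K, (∏ v, p (c v)) * 𝔼 f : V → L, Φ (levelLabel c f) =
        ∑ c : V → K, (∏ v, p (c v)) * 𝔼 f : V → L, Φ (levelLabel c f ∘ σ) := by
    refine (Fintype.sum_equiv (Equiv.arrowCongr σ.symm (Equiv.refl K)) _ _ fun c => ?_).symm
    exact congrArg₂ (· * ·) (Equiv.prod_comp σ fun v => p (c v)).symm
      (Fintype.expect_equiv (Equiv.arrowCongr σ.symm (Equiv.refl L)) _ _ fun _ => rfl)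
  have hperm (c : V → K) (f : V → L) : 𝔼 σ : Equiv.Perm V, Φ (levelLabel c f ∘ σ) ≤
      if Function.Injective f then permTutte G A x 0 else x ^ Fintype.card V := by
    split_ifs with hf
    · exact (permTutte_eq_expect_perm G A x (injective_levelLabel c hf)).ge
    · exact expect_le univ_nonempty fun σ _ => (prod_le_prod
        (fun v _ => activityFactor_nonneg (by linarith) _ v)
        fun v _ => activityFactor_le hx _ v).trans_eq (by simp)
  have htotal : ∑ c : V → K, ∏ v, p (c v) = 1 := by
    rw [← Fintype.prod_sum fun _ => p, prod_congr rfl fun _ _ => hp1, prod_const_one]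
  calc ∑ c : V → K, (∏ v, p (c v)) * 𝔼 f : V → L, Φ (levelLabel c f)
      = 𝔼 σ : Equiv.Perm V, ∑ c : V → K, (∏ v, p (c v)) * 𝔼 f : V → L, Φ (levelLabel c f ∘ σ) := by
        rw [← expect_congr rfl fun σ _ => hsymm σ, Fintype.expect_const]
    _ = ∑ c : V → K, (∏ v, p (c v)) * 𝔼 f : V → L, 𝔼 σ : Equiv.Perm V, Φ (levelLabel c f ∘ σ) := by
        rw [expect_sum_comm]
        exact sum_congr rfl fun c _ => by rw [← mul_expect, expect_comm]
    _ ≤ ∑ c : V → K, (∏ v, p (c v)) * 𝔼 f : V → L,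
          if Function.Injective f then permTutte G A x 0 else x ^ Fintype.card V :=
        sum_le_sum fun c _ => mul_le_mul_of_nonneg_left (expect_le_expect fun f _ => hperm c f)
          (prod_nonneg fun v _ => hp (c v))
    _ = _ := by rw [← sum_mul, htotal, one_mul]

section Bool

lemma activityFactor_levelLabel_of_mem_of_true [Preorder L] (hv : v ∈ A) {c : V → Bool} (f : V → L)
    (hcv : c v = true) (hc : ∀ u, G.Adj v u → c u = false) :
    activityFactor G A x (levelLabel c f) v = x := by
  have hactive : ∀ u, G.Adj v u → levelLabel c f u ≤ levelLabel c f v := fun u hu =>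
    Prod.Lex.toLex_le_toLex.2 (Or.inl (by simp [hcv, hc u hu]))
  rw [activityFactor, if_pos hv, if_pos hactive]

variable [Fintype V] [DecidableRel G.Adj] [LinearOrder L]

lemma activityFactor_levelLabel_of_mem_of_false (hv : v ∈ A) {c : V → Bool} (f : V → L)
    (hcv : c v = false) (hc : ∀ u, G.Adj v u → c u = false) :
    activityFactor G A x (levelLabel c f) v =
      1 + (x - 1) * if ∀ u ∈ G.neighborFinset v, f u ≤ f v then 1 else 0 := by
  have hactive : (∀ u, G.Adj v u → levelLabel c f u ≤ levelLabel c f v) ↔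
      ∀ u ∈ G.neighborFinset v, f u ≤ f v := by
    simp only [SimpleGraph.mem_neighborFinset]
    exact forall₂_congr fun u hu => by
      simp [levelLabel, Prod.Lex.toLex_le_toLex, hcv, hc u hu]
  simp only [activityFactor, if_pos hv, hactive]
  split_ifs <;> ring

lemma activityFactor_levelLabel_of_notMem (hv : v ∉ A) {c : V → Bool} (f : V → L)
    (hcv : c v = false) :
    activityFactor G A x (levelLabel c f) v =
      1 - (∏ u ∈ G.neighborFinset v, if c u then 0 else 1) *
        if ∀ u ∈ G.neighborFinset v, f u < f v then 1 else 0 := by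
  have hactive : (∀ u, G.Adj v u → levelLabel c f u < levelLabel c f v) ↔
      (∀ u ∈ G.neighborFinset v, c u = false) ∧ ∀ u ∈ G.neighborFinset v, f u < f v := by
    have hlt (b : Bool) : ¬ b < false := by cases b <;> decide
    simp [← forall₂_and, levelLabel, Prod.Lex.toLex_lt_toLex, hcv, hlt]
  have hlow : (∏ u ∈ G.neighborFinset v, if c u then (0 : ℝ) else 1) =
      if ∀ u ∈ G.neighborFinset v, c u = false then 1 else 0 := by
    convert prod_boole (p := fun u => c u = false) using 2 with u
    by_cases hu : c u <;> simp [hu]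
  simp only [activityFactor, if_neg hv, hactive, hlow, ite_and]
  split_ifs <;> simp

/-- A lower bound for the expected activity factor of `v` when the labels within the levels are
uniform, given levels `c` (`true` is high) for which the vertices outside `A` are low. The product
is `1` if all neighbours of `v` are low and `0` otherwise. -/
noncomputable def levelBound (G : SimpleGraph V) [DecidableRel G.Adj] (A : Set V) (x : ℝ)
    (c : V → Bool) (v : V) : ℝ :=
  if v ∈ A then if c v then x else (G.degree v + x) / (G.degree v + 1)
  else 1 - (G.degree v + 1 : ℝ)⁻¹ * ∏ u ∈ G.neighborFinset v, if c u then 0 else 1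

lemma levelBound_nonneg (hx : 0 ≤ x) (c : V → Bool) (v : V) : 0 ≤ levelBound G A x c v := by
  have hprod : (∏ u ∈ G.neighborFinset v, if c u then (0 : ℝ) else 1) ≤ 1 :=
    prod_le_one (fun u _ => by positivity) fun u _ => by split_ifs <;> simp
  have hinv : (G.degree v + 1 : ℝ)⁻¹ ≤ 1 := inv_le_one_of_one_le₀ (by simp)
  unfold levelBound
  split_ifs
  · exact hx
  · positivity
  · exact sub_nonneg.2 (mul_le_one₀ hinv (prod_nonneg fun u _ => by positivity) hprod)

lemma monotone_levelBound (hv : v ∉ A) : Monotone fun c => levelBound G A x c v := by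
  intro c c' hcc'
  simp only [levelBound, if_neg hv]
  gcongr with u
  have hu : c u ≤ c' u := hcc' u
  cases hc : c u <;> cases hc' : c' u <;> simp_all [Bool.le_iff_imp]

lemma levelBound_le_expect_activityFactor [DecidableEq V] [Fintype L] [Nonempty L]
    (hbip : IsBipartition G A) (hx : 1 ≤ x) {c : V → Bool} (hc : ∀ u ∉ A, c u = false) (v : V) :
    levelBound G A x c v ≤ 𝔼 f : V → L, activityFactor G A x (levelLabel c f) v := by
  have hirr : v ∉ G.neighborFinset v := by simp
  by_cases hv : v ∈ A
  · have hlow : ∀ u, G.Adj v u → c u = false := fun u hu => hc u ((hbip v u hu).1 hv)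
    cases hcv : c v with
    | true =>
      simp only [activityFactor_levelLabel_of_mem_of_true hv _ hcv hlow, Fintype.expect_const]
      simp [levelBound, hv, hcv]
    | false =>
      have hmax := inv_card_add_one_le_expect_ite_forall_le (𝕜 := ℝ) (L := L) hirr
      simp only [activityFactor_levelLabel_of_mem_of_false hv _ hcv hlow, expect_add_distrib,
        Fintype.expect_const, ← mul_expect]
      calc levelBound G A x c v = 1 + (x - 1) * (G.degree v + 1 : ℝ)⁻¹ := by
            simp only [levelBound, hv, hcv, if_true, Bool.false_eq_true, if_false]
            field_simp
            ring
        _ ≤ _ := by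
            rw [SimpleGraph.card_neighborFinset_eq_degree] at hmax
            gcongr
            convert hmax
  · have hmax := expect_ite_forall_lt_le_inv_card_add_one (𝕜 := ℝ) (L := L) hirr
    rw [SimpleGraph.card_neighborFinset_eq_degree] at hmax
    simp only [activityFactor_levelLabel_of_notMem hv _ (hc v hv), expect_sub_distrib,
      Fintype.expect_const, ← mul_expect]
    rw [levelBound, if_neg hv, mul_comm]
    refine sub_le_sub_left (mul_le_mul_of_nonneg_left ?_ (prod_nonneg fun u _ => ?_)) 1
    · convert hmax
    · positivity

end Bool

end LevelLabel

section Gamma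

variable {x s d : ℝ}

lemma gam_denom_pos (hx : 0 < x) (hs0 : 0 ≤ s) (hs1 : s ≤ 1) (hd : 0 ≤ d) :
    0 < (d + x) * s + (d + 1) * x * (1 - s) := by
  rcases hs0.eq_or_lt with rfl | hs
  · rw [mul_zero, zero_add, sub_zero, mul_one]
    positivity
  · exact add_pos_of_pos_of_nonneg (by positivity) (mul_nonneg (by positivity) (sub_nonneg.2 hs1))

lemma gam_nonneg (hx : 0 < x) (hs0 : 0 ≤ s) (hs1 : s ≤ 1) (hd : 0 ≤ d) : 0 ≤ gam x s d :=
  div_nonneg (by positivity) (gam_denom_pos hx hs0 hs1 hd).le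

lemma gam_le_one (hx : 0 < x) (hs0 : 0 ≤ s) (hs1 : s ≤ 1) (hd : 0 ≤ d) : gam x s d ≤ 1 :=
  div_le_one_of_le₀
    (le_add_of_nonneg_right (mul_nonneg (by positivity) (sub_nonneg.2 hs1)))
    (gam_denom_pos hx hs0 hs1 hd).le

lemma add_mul_gam (hx : 0 < x) (hs0 : 0 ≤ s) (hs1 : s ≤ 1) (hd : 0 ≤ d) :
    ((d + x) * s / (d + 1) + x * (1 - s)) * gam x s d = (d + x) * s / (d + 1) := by
  have hdenom := (gam_denom_pos hx hs0 hs1 hd).ne'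
  have hsum : (d + x) * s / (d + 1) + x * (1 - s) =
      ((d + x) * s + (d + 1) * x * (1 - s)) / (d + 1) := by
    field_simp
  rw [hsum, gam, mul_comm, div_mul_div_cancel₀ hdenom]

end Gamma

section LevelWeights

variable {V : Type*} [Fintype V] {G : SimpleGraph V} [DecidableRel G.Adj] {A : Set V} {x s : ℝ}
  {v : V}

/-- The probability that the level of `v` is `b` under the tilted product measure. A vertex of `A`
is low with probability `γ_{x,s}(d_v)`, a vertex outside `A` is always low. -/
noncomputable def tiltedWeight (G : SimpleGraph V) [DecidableRel G.Adj] (A : Set V) (x s : ℝ)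
    (v : V) (b : Bool) : ℝ :=
  if v ∈ A then if b then 1 - gam x s (G.degree v) else gam x s (G.degree v)
  else if b then 0 else 1

/-- The total mass of `v` before the tilted weights are normalised: for `v ∈ A`, the expectation of
`levelBound` over a level that is low with probability `s`; otherwise, the probability `s` of the
low level. -/
noncomputable def levelMass (G : SimpleGraph V) [DecidableRel G.Adj] (A : Set V) (x s : ℝ)
    (v : V) : ℝ :=
  if v ∈ A then (G.degree v + x) * s / (G.degree v + 1) + x * (1 - s) else s

/-- The contribution of `v` to the lower bound for `T̃(x, 0)`. -/
noncomputable def vertexBound (G : SimpleGraph V) [DecidableRel G.Adj] (A : Set V) (x s : ℝ)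
    (v : V) : ℝ :=
  levelMass G A x s v * if v ∈ A then 1
    else 1 - (G.degree v + 1 : ℝ)⁻¹ * ∏ u ∈ G.neighborFinset v, gam x s (G.degree u)

lemma tiltedWeight_nonneg (hx : 0 < x) (hs0 : 0 ≤ s) (hs1 : s ≤ 1) (v : V) (b : Bool) :
    0 ≤ tiltedWeight G A x s v b := by
  have hle := gam_le_one hx hs0 hs1 (Nat.cast_nonneg (G.degree v))
  unfold tiltedWeight
  split_ifs
  exacts [sub_nonneg.2 hle, gam_nonneg hx hs0 hs1 (Nat.cast_nonneg _), le_rfl, zero_le_one]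

lemma sum_tiltedWeight (v : V) : ∑ b, tiltedWeight G A x s v b = 1 := by
  by_cases hv : v ∈ A <;> simp [tiltedWeight, hv]

lemma levelMass_nonneg (hx : 0 ≤ x) (hs0 : 0 ≤ s) (hs1 : s ≤ 1) (v : V) :
    0 ≤ levelMass G A x s v := by
  unfold levelMass
  split_ifs
  · exact add_nonneg (by positivity) (mul_nonneg hx (sub_nonneg.2 hs1))
  · exact hs0

lemma levelMass_mul_tiltedWeight_of_mem (hx : 0 < x) (hs0 : 0 ≤ s) (hs1 : s ≤ 1) (hv : v ∈ A)
    (c : V → Bool) :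
    levelMass G A x s v * tiltedWeight G A x s v (c v) =
      (if c v then 1 - s else s) * levelBound G A x c v := by
  have hgam := add_mul_gam hx hs0 hs1 (Nat.cast_nonneg (G.degree v))
  cases hcv : c v <;> simp only [levelMass, tiltedWeight, levelBound, hv, hcv, if_true,
    Bool.false_eq_true, if_false]
  · rw [hgam, mul_comm, mul_div_assoc']
  · rw [mul_sub, hgam]
    ring

lemma sum_prod_tiltedWeight_mul_levelBound [DecidableEq V] (hbip : IsBipartition G A)
    (hv : v ∉ A) :
    ∑ c : V → Bool, (∏ u, tiltedWeight G A x s u (c u)) * levelBound G A x c v =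
      1 - (G.degree v + 1 : ℝ)⁻¹ * ∏ u ∈ G.neighborFinset v, gam x s (G.degree u) := by
  have hone : ∑ c : V → Bool, ∏ u, tiltedWeight G A x s u (c u) = 1 := by
    rw [← Fintype.prod_sum, prod_congr rfl fun u _ => sum_tiltedWeight u, prod_const_one]
  have hlow : ∑ c : V → Bool, (∏ u, tiltedWeight G A x s u (c u)) *
      (∏ u ∈ G.neighborFinset v, if c u then 0 else 1) =
        ∏ u ∈ G.neighborFinset v, gam x s (G.degree u) := by
    rw [sum_prod_mul_prod_eq_prod_sum_mul sum_tiltedWeight _ fun _ b => if b then 0 else 1]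
    refine prod_congr rfl fun u hu => ?_
    have huA : u ∈ A := (hbip u v ((G.mem_neighborFinset v u).1 hu).symm).2 hv
    simp [tiltedWeight, huA]
  simp only [levelBound, if_neg hv, mul_sub, mul_one, sum_sub_distrib, hone, ← hlow, mul_sum]
  exact congrArg (1 - ·) (sum_congr rfl fun c _ => mul_left_comm _ _ _)

lemma vertexBound_eq_levelMass_mul_sum [DecidableEq V] (hbip : IsBipartition G A) (v : V) :
    vertexBound G A x s v = levelMass G A x s v * if v ∉ A then
      ∑ c : V → Bool, (∏ u, tiltedWeight G A x s u (c u)) * levelBound G A x c v else 1 := by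
  by_cases hv : v ∈ A
  · simp [vertexBound, hv]
  · rw [vertexBound, if_neg hv, if_pos hv, sum_prod_tiltedWeight_mul_levelBound hbip hv]

lemma vertexBound_nonneg (hbip : IsBipartition G A) (hx : 0 < x) (hs0 : 0 ≤ s)
    (hs1 : s ≤ 1) (v : V) : 0 ≤ vertexBound G A x s v := by
  have hsum : 0 ≤ ∑ c : V → Bool, (∏ u, tiltedWeight G A x s u (c u)) * levelBound G A x c v :=
    sum_nonneg fun c _ => mul_nonneg
      (prod_nonneg fun u _ => tiltedWeight_nonneg hx hs0 hs1 u _) (levelBound_nonneg hx.le c v)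
  rw [vertexBound_eq_levelMass_mul_sum hbip]
  refine mul_nonneg (levelMass_nonneg hx.le hs0 hs1 v) ?_
  split_ifs
  exacts [zero_le_one, hsum]

section Levels

variable {L : Type*} [DecidableEq V] [LinearOrder L] [Fintype L] [Nonempty L]

lemma prod_levelBound_le_expect_prod_activityFactor (hbip : IsBipartition G A)
    (hx : 1 ≤ x) {c : V → Bool} (hc : ∀ u ∉ A, c u = false) :
    ∏ v, levelBound G A x c v ≤
      𝔼 f : V → L, ∏ v, activityFactor G A x (levelLabel c f) v := by
  have hx0 : 0 ≤ x := by linarith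
  calc ∏ v, levelBound G A x c v
      ≤ ∏ v, 𝔼 f : V → L, activityFactor G A x (levelLabel c f) v :=
        prod_le_prod (fun v _ => levelBound_nonneg hx0 c v)
          fun v _ => levelBound_le_expect_activityFactor hbip hx hc v
    _ ≤ 𝔼 f : V → L, ∏ v, activityFactor G A x (levelLabel c f) v :=
        prod_expect_le_expect_prod_of_monotoneOn_antitoneOn (L := fun _ => L) A
          (φ := fun v f => activityFactor G A x (levelLabel c f) v)
          (fun v _ _ => activityFactor_nonneg hx0 _ v)
          fun v _ _ _ hmem hnotMem => activityFactor_levelLabel_mono hbip hx c hmem hnotMem v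

lemma prod_levelMass_mul_prod_levelBound_le (hbip : IsBipartition G A) (hx : 1 ≤ x)
    (hs0 : 0 ≤ s) (hs1 : s ≤ 1) (c : V → Bool) :
    (∏ v, levelMass G A x s v) *
        ((∏ v, tiltedWeight G A x s v (c v)) * ∏ v with v ∉ A, levelBound G A x c v) ≤
      (∏ v, if c v then 1 - s else s) *
        𝔼 f : V → L, ∏ v, activityFactor G A x (levelLabel c f) v := by
  have hweight : 0 ≤ ∏ v, if c v then 1 - s else s :=
    prod_nonneg fun v _ => by split_ifs <;> linarith
  by_cases hc : ∀ u ∉ A, c u = false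
  · calc (∏ v, levelMass G A x s v) *
          ((∏ v, tiltedWeight G A x s v (c v)) * ∏ v with v ∉ A, levelBound G A x c v)
        = ∏ v, (if c v then 1 - s else s) * levelBound G A x c v := by
          rw [prod_filter, ← prod_mul_distrib, ← prod_mul_distrib]
          refine prod_congr rfl fun v _ => ?_
          by_cases hv : v ∈ A
          · rw [if_neg (not_not.2 hv), mul_one,
              levelMass_mul_tiltedWeight_of_mem (by linarith) hs0 hs1 hv]
          · simp [levelMass, tiltedWeight, hv, hc v hv]
      _ ≤ _ := by
          rw [prod_mul_distrib]
          exact mul_le_mul_of_nonneg_left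
            (prod_levelBound_le_expect_prod_activityFactor hbip hx hc) hweight
  · push Not at hc
    obtain ⟨u, hu, hcu⟩ := hc
    have hzero : ∏ v, tiltedWeight G A x s v (c v) = 0 :=
      prod_eq_zero (mem_univ u) (by simp [tiltedWeight, hu, hcu])
    rw [hzero, zero_mul, mul_zero]
    exact mul_nonneg hweight (expect_nonneg fun f _ => prod_nonneg fun v _ =>
      activityFactor_nonneg (by linarith) _ v)

lemma prod_vertexBound_le_sum_mul_expect (hbip : IsBipartition G A) (hx : 1 ≤ x)
    (hs0 : 0 ≤ s) (hs1 : s ≤ 1) :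
    ∏ v, vertexBound G A x s v ≤ ∑ c : V → Bool, (∏ v, if c v then 1 - s else s) *
      𝔼 f : V → L, ∏ v, activityFactor G A x (levelLabel c f) v := by
  have hx0 : 0 < x := by linarith
  calc ∏ v, vertexBound G A x s v
      = (∏ v, levelMass G A x s v) * ∏ v with v ∉ A,
          ∑ c : V → Bool, (∏ u, tiltedWeight G A x s u (c u)) * levelBound G A x c v := by
        rw [prod_filter, ← prod_mul_distrib]
        exact prod_congr rfl fun v _ => vertexBound_eq_levelMass_mul_sum hbip v
    _ ≤ (∏ v, levelMass G A x s v) * ∑ c : V → Bool,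
          (∏ u, tiltedWeight G A x s u (c u)) * ∏ v with v ∉ A, levelBound G A x c v := by
        refine mul_le_mul_of_nonneg_left ?_
          (prod_nonneg fun v _ => levelMass_nonneg hx0.le hs0 hs1 v)
        exact prod_sum_mul_le_sum_mul_prod_of_monotone (tiltedWeight_nonneg hx0 hs0 hs1)
          sum_tiltedWeight (fun v _ c => levelBound_nonneg hx0.le c v)
          fun v hv => monotone_levelBound (mem_filter.1 hv).2
    _ ≤ _ := by
        rw [mul_sum]
        exact sum_le_sum fun c _ => prod_levelMass_mul_prod_levelBound_le hbip hx hs0 hs1 c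

end Levels

lemma prod_vertexBound_le_permTutte [DecidableEq V] (hbip : IsBipartition G A) (hx : 1 ≤ x)
    (hs0 : 0 ≤ s) (hs1 : s ≤ 1) :
    ∏ v, vertexBound G A x s v ≤ permTutte G A x 0 := by
  refine ge_of_tendsto
    (tendsto_expect_ite_injective V (permTutte G A x 0) (x ^ Fintype.card V)) ?_
  filter_upwards [eventually_ne_atTop 0] with n hn
  have : NeZero n := ⟨hn⟩
  exact (prod_vertexBound_le_sum_mul_expect hbip hx hs0 hs1).trans <|
    sum_prod_mul_expect_activityFactor_le (p := fun b : Bool => if b then 1 - s else s)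
      (fun b => by split_ifs <;> linarith) (by simp) hx

end LevelWeights

lemma IsBipartition.compl {V : Type*} {G : SimpleGraph V} {A : Set V} (hbip : IsBipartition G A) :
    IsBipartition G Aᶜ :=
  fun u v huv => not_congr (hbip u v huv)

theorem permTutte_mul_ge_prod_general
    {V : Type*} [Fintype V] [DecidableEq V] (G : SimpleGraph V) [DecidableRel G.Adj]
    (A : Set V) (hbip : IsBipartition G A) (x s : ℝ)
    (hx : 1 ≤ x) (hs0 : 0 ≤ s) (hs1 : s ≤ 1) :
    permTutte G A x 0 * permTutte G A 0 x ≥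
      ∏ v : V,
        ((((G.degree v : ℝ) + x) * s / ((G.degree v : ℝ) + 1) + x * (1 - s)) *
          (s - s / ((G.degree v : ℝ) + 1) *
            ∏ u ∈ G.neighborFinset v, gam x s (G.degree u))) := by
  have hnonneg {B : Set V} (hB : IsBipartition G B) : 0 ≤ ∏ v, vertexBound G B x s v :=
    prod_nonneg fun v _ => vertexBound_nonneg hB (by linarith) hs0 hs1 v
  have hle {B : Set V} (hB : IsBipartition G B) :
      ∏ v, vertexBound G B x s v ≤ permTutte G B x 0 :=
    prod_vertexBound_le_permTutte hB hx hs0 hs1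
  calc _ = (∏ v, vertexBound G A x s v) * ∏ v, vertexBound G Aᶜ x s v := by
        rw [← prod_mul_distrib]
        refine prod_congr rfl fun v _ => ?_
        by_cases hv : v ∈ A <;> simp only [vertexBound, levelMass, hv, Set.mem_compl_iff,
          not_true, not_false_iff, if_true, if_false] <;> ring
    _ ≤ permTutte G A x 0 * permTutte G Aᶜ x 0 :=
        mul_le_mul (hle hbip) (hle hbip.compl) (hnonneg hbip.compl)
          ((hnonneg hbip).trans (hle hbip))
    _ = permTutte G A x 0 * permTutte G A 0 x := by rw [permTutte_swap G A 0 x]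

/-- For `x ≥ 2` and `0 ≤ s ≤ 1`,
`T̃_H(x,0)·T̃_H(0,x) ≥ Π_{v∈V} [((d_v+x)s/(d_v+1) + x(1−s)) · (s − s/(d_v+1) Π_{u∈N(v)} γ_{x,s}(d_u))]`. -/
theorem permTutte_mul_ge_prod
    {V : Type*} [Fintype V] [DecidableEq V] (G : SimpleGraph V) [DecidableRel G.Adj]
    (A : Set V) (hbip : IsBipartition G A) (x s : ℝ)
    (hx : 2 ≤ x) (hs0 : 0 ≤ s) (hs1 : s ≤ 1) :
    permTutte G A x 0 * permTutte G A 0 x ≥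
      ∏ v : V,
        ((((G.degree v : ℝ) + x) * s / ((G.degree v : ℝ) + 1) + x * (1 - s)) *
          (s - s / ((G.degree v : ℝ) + 1) *
            ∏ u ∈ G.neighborFinset v, gam x s (G.degree u))) :=
  permTutte_mul_ge_prod_general G A hbip x s (one_le_two.trans hx) hs0 hs1
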